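/- There are exactly 26 conjugacy classes of torsion-free subgroups of PSL(2,ℤ) of index 18 and genus zero. -/

import Mathlib

open Matrix

/-- `SL(2,ℤ)`: the group of 2×2 integer matrices of determinant 1. -/
abbrev SL2Z := Matrix.SpecialLinearGroup (Fin 2) ℤ

instance : Fact (Even (Fintype.card (Fin 2))) := ⟨by simp⟩

/-- The subgroup `{±I}` of `SL(2,ℤ)`. -/
def pmOne : Subgroup SL2Z := Subgroup.zpowers (-1 : SL2Z)

instance : pmOne.Normal := by
  constructor
  intro x hx g
  obtain ⟨n, rfl⟩ := hx
  have h : Commute ((-1 : SL2Z) ^ n) g := (Commute.neg_one_left g).zpow_left n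
  refine ⟨n, ?_⟩
  rw [← h.eq, mul_assoc, mul_inv_cancel, mul_one]

/-- `PSL(2,ℤ)`, the modular group, as the quotient of `SL(2,ℤ)` by `{±I}`. -/
abbrev PSL2Z := SL2Z ⧸ pmOne

/-- The natural projection `ξ : SL(2,ℤ) → PSL(2,ℤ)`. -/
def xi : SL2Z →* PSL2Z := QuotientGroup.mk' pmOne

/-- The element `S` of `PSL(2,ℤ)`, the image of `[[0,-1],[1,0]]`. -/
def Sp : PSL2Z := xi ⟨!![0, -1; 1, 0], by norm_num [Matrix.det_fin_two_of]⟩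

/-- The element `T` of `PSL(2,ℤ)`, the image of `[[1,1],[0,1]]`. -/
def Tp : PSL2Z := xi ⟨!![1, 1; 0, 1], by norm_num [Matrix.det_fin_two_of]⟩

/-- The number of left cosets in `PSL(2,ℤ)/Γ` fixed by `g` (for the
left-multiplication action).  For `g = S` this is `e₂(Γ)`, for `g = S*T` it is `e₃(Γ)`. -/
noncomputable def nFix (g : PSL2Z) (Γ : Subgroup PSL2Z) : ℕ :=
  Nat.card {x : PSL2Z ⧸ Γ // g • x = x}

/-- The number of orbits of the cyclic subgroup generated by `g` on `PSL(2,ℤ)/Γ`.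
For `g = S, S*T, T` these are `c₂(Γ), c₃(Γ), h(Γ)` respectively. -/
noncomputable def nOrb (g : PSL2Z) (Γ : Subgroup PSL2Z) : ℕ :=
  Nat.card (MulAction.orbitRel.Quotient (Subgroup.zpowers g) (PSL2Z ⧸ Γ))

/-- `Γ` has genus zero: `c₂(Γ) + c₃(Γ) + h(Γ) = index(Γ) + 2`. -/
def GenusZero (Γ : Subgroup PSL2Z) : Prop :=
  nOrb Sp Γ + nOrb (Sp * Tp) Γ + nOrb Tp Γ = Γ.index + 2

/-- `Γ` is torsion free: it contains no nontrivial element of finite order. -/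
def TorsionFree (Γ : Subgroup PSL2Z) : Prop :=
  ∀ x ∈ Γ, x ≠ 1 → ¬ IsOfFinOrder x

/-- Two subgroups of a group are conjugate. -/
def SubgroupConj {G : Type*} [Group G] (H K : Subgroup G) : Prop :=
  ∃ g : G, Subgroup.map (MulAut.conj g).toMonoidHom H = K

/-- The number of conjugacy classes of subgroups of `PSL(2,ℤ)` satisfying `P`. -/
noncomputable def countClasses (P : Subgroup PSL2Z → Prop) : ℕ :=
  Nat.card (Quot fun A B : {Γ : Subgroup PSL2Z // P Γ} => SubgroupConj A.1 B.1)

/-- The index of the torsion free subgroup `Γ^tf` associated to `Γ`: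
`index(Γ) + 3·e₂(Γ) + 2·e₃(Γ)`. -/
noncomputable def tfIdx (Γ : Subgroup PSL2Z) : ℕ :=
  Γ.index + 3 * nFix Sp Γ + 2 * nFix (Sp * Tp) Γ

/-- The order three rotation of the labels in consecutive triples. -/
def rot (i : ℕ) : ℕ := Nat.add (Nat.mul 3 (Nat.div i 3)) (Nat.mod (Nat.succ i) 3)

/-- The `i`-th base-32 digit. -/
def look (m i : ℕ) : ℕ := Nat.mod (Nat.div m (Nat.pow 32 i)) 32

/-- The map `T = S U` on labels, where `S` is given by the digits of `m`. -/
def tmap (m i : ℕ) : ℕ := look m (rot i)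

/-- Check that no iterate of `t` at `x` is below `i`, stopping on return to `i`. -/
def goMin (t : ℕ → ℕ) (i : ℕ) : ℕ → ℕ → Bool
  | 0, _ => true
  | n + 1, x => bif Nat.ble i (t x) then (bif Nat.beq (t x) i then true else goMin t i n (t x))
      else false

def countMin (t : ℕ → ℕ) : ℕ := ((List.range 18).filter (fun i => goMin t i 18 i)).length

def pack (acc : List (ℕ × ℕ)) : ℕ := acc.foldr (fun pq n => pq.2 * 32 ^ pq.1 + pq.1 * 32 ^ pq.2 + n) 0

/-- Packed involutions of the 26 representatives; with each comes a list of base points `x`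
and residues modulo 6781 of the packed involution obtained by relabelling from `x`. -/
def repTable : List (ℕ × List (ℕ × ℕ)) :=
  [(640068790336292369576561665, [(0, 4739), (1, 2901), (2, 5031), (3, 1332), (4, 5637), (5, 1732), (6, 744), (7, 3620), (8, 5034)]),
   (640026436647927929465015297, [(0, 2883), (1, 1045), (2, 3175), (3, 6257), (4, 3781), (5, 6657), (6, 5889), (7, 1984), (8, 2989), (9, 6491), (10, 166), (11, 5464), (12, 3576), (13, 2253), (14, 5059), (15, 5794), (16, 5502), (17, 3664)]),
   (639953203109984099564063745, [(0, 4459), (1, 2621), (2, 4751), (3, 1052), (4, 5357), (5, 1452), (6, 3684), (7, 6560), (8, 6365), (9, 3678), (10, 2827), (11, 4715), (12, 3597), (13, 3305), (14, 1467), (15, 5485), (16, 5193), (17, 3355)]),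
   (520273199423462405759372289, [(0, 1425), (1, 6368), (2, 1717), (3, 4799), (4, 2323), (5, 5199), (6, 650), (7, 3526), (8, 28), (9, 636), (10, 2776), (11, 5310), (12, 1875), (13, 2581), (14, 5010), (15, 5787), (16, 1474), (17, 5773)]),
   (640026436647888484518923265, [(0, 3646), (1, 1808), (2, 3938), (3, 397), (4, 3203), (5, 1720), (6, 3828), (7, 4446), (8, 5311)]),
   (639953203109944654617971713, [(0, 5222), (1, 3384), (2, 5514), (3, 1973), (4, 4779), (5, 3296), (6, 1623), (7, 6606), (8, 3106), (9, 352), (10, 971), (11, 3079), (12, 1741), (13, 1449), (14, 6392), (15, 3849), (16, 3557), (17, 1719)]),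
   (520273199423422960813280257, [(0, 2188), (1, 350), (2, 2480), (3, 5720), (4, 1745), (5, 262), (6, 5370), (7, 269), (8, 72), (9, 4091), (10, 920), (11, 3674), (12, 19), (13, 725), (14, 3154), (15, 3931), (16, 6399), (17, 3917)]),
   (639953203109876450570865665, [(0, 3025), (1, 1187), (2, 3317), (3, 2547), (4, 874), (5, 6018), (6, 1644), (7, 1352), (8, 6295)]),
   (520273199423354756766174209, [(0, 6772), (1, 4934), (2, 283), (3, 6294), (4, 4621), (5, 2984), (6, 5391), (7, 5099), (8, 3261), (9, 2976), (10, 2496), (11, 1469), (12, 1595), (13, 2301), (14, 4730), (15, 5507), (16, 1194), (17, 5493)]),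
   (639953200798409508100574209, [(0, 5608), (1, 3770), (2, 5900), (3, 5130), (4, 5382), (5, 4919), (6, 3595), (7, 4521), (8, 3381), (9, 1947), (10, 2476), (11, 36), (12, 4151), (13, 3859), (14, 2021), (15, 806), (16, 514), (17, 5457)]),
   (640068750921812282380979201, [(0, 2297), (1, 459), (2, 2589), (3, 1819), (4, 2456), (5, 2945), (6, 3249), (7, 931), (8, 275), (9, 2492), (10, 1026), (11, 3527), (12, 5705), (13, 5516), (14, 5802), (15, 6572), (16, 6280), (17, 4442)]),
   (640025253500412375165111297, [(0, 3159), (1, 1321), (2, 3451), (3, 2681), (4, 5107), (5, 4801), (6, 4544), (7, 2230), (8, 3316)]),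
   (520235417900801714596940801, [(0, 825), (1, 5768), (2, 1117), (3, 347), (4, 561), (5, 1487), (6, 202), (7, 6504), (8, 2336), (9, 4539), (10, 1388), (11, 2391), (12, 639), (13, 1253), (14, 6551), (15, 3721), (16, 4913), (17, 3430)]),
   (640026433184555602997742593, [(0, 4424), (1, 2586), (2, 4716), (3, 3946), (4, 4069), (5, 4654), (6, 6232), (7, 6512), (8, 2228)]),
   (639953199646611773096791041, [(0, 6000), (1, 4162), (2, 6292), (3, 5522), (4, 1864), (5, 6216)]),
   (520273195960090079292099585, [(0, 2966), (1, 1128), (2, 3258), (3, 2488), (4, 5611), (5, 3182), (6, 1498), (7, 93), (8, 2308), (9, 3465), (10, 1020), (11, 1512), (12, 5577), (13, 4051), (14, 2568), (15, 2481), (16, 6178), (17, 4695)]),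
   (639947149120189493944585217, [(0, 2859), (1, 1021), (2, 3151), (3, 2381), (4, 2226), (5, 6462), (6, 5297), (7, 5613), (8, 4130), (9, 2684), (10, 1496), (11, 2475), (12, 6271), (13, 1337), (14, 973), (15, 3245), (16, 2953), (17, 1115)]),
   (639909407012008889977736193, [(0, 4701), (1, 2863), (2, 4993), (3, 4223), (4, 425), (5, 838), (6, 3548), (7, 581), (8, 5879)]),
   (441645757206765630497295361, [(0, 2431), (1, 593), (2, 2723), (3, 1953), (4, 908), (5, 6007), (6, 1426), (7, 3550), (8, 2067), (9, 3572), (10, 4707), (11, 3224), (12, 3130), (13, 2884), (14, 4613), (15, 4972), (16, 3746), (17, 6455)]),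
   (639836210330399610081709057, [(0, 1796), (1, 6739), (2, 2088), (3, 1318), (4, 822), (5, 6435), (9, 5467), (10, 2268), (11, 785)]),
   (404102759058648925202353153, [(0, 1176), (1, 6119), (2, 1468), (3, 698), (4, 661), (5, 5842), (6, 1909), (7, 3371), (8, 2398), (9, 3525), (10, 5213), (11, 3091), (12, 5093), (13, 4936), (14, 666), (15, 11), (16, 1528), (17, 963)]),
   (520273199423462369051809955, [(0, 6048), (1, 1696), (2, 5342), (3, 2459), (4, 2473), (5, 4941), (6, 6243), (7, 5216), (8, 6723)]),
   (520235417900766527812016291, [(0, 2579), (1, 1096), (2, 2263), (3, 3237), (4, 211), (5, 4720), (6, 3827), (7, 3128), (8, 3559)]),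
   (441645757206730443712370851, [(0, 4185), (1, 2702), (2, 1412)]),
   (404102759058613738417428643, [(0, 2930), (1, 1447), (2, 6430), (6, 6023), (7, 2943), (8, 5267), (12, 3198), (13, 3478), (14, 5975)]),
   (402883389751680906524894403, [(0, 2583), (1, 1748), (2, 1688)])]

/-- Packed involutions of the 26 representatives. -/
def repCodes : List ℕ := repTable.map Prod.fst

/-- The label morphism given by a list of images of the first labels of triangles. -/
def hval (bases : List ℕ) (i : ℕ) : ℕ :=
  rot^[i % 3] (bases.getD (i / 3) 0)

/-- Follow the matching, constructing a morphism to the representative `m`. -/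
def follow (m : ℕ) : List (ℕ × ℕ) → List ℕ → Option (List ℕ)
  | [], bs => some bs
  | (p, q) :: ps, bs =>
    bif Nat.beq q (3 * bs.length) then follow m ps (bs ++ [look m (hval bs p)])
    else bif Nat.beq (look m (hval bs p)) (hval bs q) then follow m ps bs else none

def isMor (m l : ℕ) (bs : List ℕ) : Bool :=
  (List.range 18).all fun i => Nat.ble (hval bs i) 17 && Nat.beq (hval bs (rot i)) (rot (hval bs i))
    && Nat.beq (hval bs (look l i)) (look m (hval bs i))

def tryOne (acc : List (ℕ × ℕ)) (l m x : ℕ) : Bool :=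
  match follow m acc [x] with
  | none => false
  | some bs => isMor m l bs

/-- The packed involution really encodes the matching. -/
def wellPacked (l : ℕ) (acc : List (ℕ × ℕ)) : Bool :=
  acc.all fun pq => Nat.beq (look l pq.1) pq.2 && Nat.beq (look l pq.2) pq.1

def leafOK (acc : List (ℕ × ℕ)) : Bool :=
  wellPacked (pack acc) acc &&
  bif Nat.beq (countMin (look (pack acc)) + countMin rot + countMin (tmap (pack acc))) 20 then
    repTable.any fun m => m.2.any fun x => Nat.beq (Nat.mod (pack acc) 6781) x.2 &&
      tryOne acc.reverse (pack acc) m.1 x.1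
  else true

def tri : List (ℕ × ℕ × ℕ) := [(0,1,2),(3,4,5),(6,7,8),(9,10,11),(12,13,14),(15,16,17)]

def search : ℕ → List ℕ → List (ℕ × ℕ × ℕ) → List (ℕ × ℕ) → Bool
  | _, [], _ :: _, _ => true
  | _, [], [], acc => leafOK acc
  | 0, _ :: _, _, _ => false
  | n + 1, p :: rest, [], acc =>
      rest.all fun q => search n (rest.erase q) [] ((p, q) :: acc)
  | n + 1, p :: rest, (a, b, c) :: sup, acc =>
      (rest.all fun q => search n (rest.erase q) ((a, b, c) :: sup) ((p, q) :: acc)) &&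
        search n (rest ++ [b, c]) sup ((p, a) :: acc)

theorem search_true : search 9 [0,1,2] (tri.drop 1) [] = true := by decide +kernel

theorem goMin_spec (t : ℕ → ℕ) (i : ℕ) : ∀ (n j : ℕ), (∀ k ≤ j, i ≤ t^[k] i) →
    (goMin t i n (t^[j] i) = true ↔ ∀ k ≤ j + n, i ≤ t^[k] i) := by
  intro n
  induction n with
  | zero => intro j h; simpa [goMin] using h
  | succ n ih =>
    intro j h
    have e : t (t^[j] i) = t^[j + 1] i := (Function.iterate_succ_apply' t j i).symm
    simp only [goMin, e]
    rcases hb : Nat.ble i (t^[j + 1] i) with _ | _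
    · simp only [cond_false, Bool.false_eq_true, false_iff]
      intro H
      have := H (j + 1) (by omega)
      exact Bool.false_ne_true (hb.symm.trans (Nat.ble_eq_true_of_le this))
    · simp only [cond_true]
      have hle : i ≤ t^[j + 1] i := Nat.le_of_ble_eq_true hb
      rcases hq : Nat.beq (t^[j + 1] i) i with _ | _
      · simp only [cond_false]
        rw [ih (j + 1)]
        · rw [show j + 1 + n = j + (n + 1) by omega]
        · intro k hk
          rcases Nat.lt_or_ge j k with h1 | h1
          · rw [show k = j + 1 by omega]; exact hle
          · exact h k h1
      · simp only [cond_true, true_iff]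
        intro k _
        have hp : Function.IsPeriodicPt t (j + 1) i := Nat.eq_of_beq_eq_true hq
        rw [← hp.iterate_mod_apply k]
        exact h _ (by have := Nat.mod_lt k (show j + 1 > 0 by omega); omega)

theorem card_orbits {G Y : Type*} [Group G] [MulAction G Y] (g : G) (f : ℕ → Y) (t : ℕ → ℕ)
    (hinj : ∀ i < 18, ∀ j < 18, f i = f j → i = j) (hsurj : ∀ y, ∃ i < 18, f i = y)
    (ht : ∀ i < 18, t i < 18 ∧ g • f i = f (t i)) :
    Nat.card (MulAction.orbitRel.Quotient (Subgroup.zpowers g) Y) = countMin t := by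
  classical
  have hit : ∀ k, ∀ i < 18, t^[k] i < 18 ∧ g ^ k • f i = f (t^[k] i) := by
    intro k
    induction k with
    | zero => intro i hi; simpa using hi
    | succ k ih =>
      intro i hi
      rw [Function.iterate_succ_apply', pow_succ', mul_smul, (ih i hi).2]
      exact ht _ (ih i hi).1
  have hmin : ∀ i, goMin t i 18 i = true ↔ ∀ k ≤ 18, i ≤ t^[k] i := by
    intro i
    simpa using goMin_spec t i 18 0 (by simp)
  have hfin : Finite Y := by
    refine Finite.of_surjective (fun i : Fin 18 => f i) ?_
    intro y
    obtain ⟨i, hi, h⟩ := hsurj y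
    exact ⟨⟨i, hi⟩, h⟩
  have hcard : Nat.card Y ≤ 18 := by
    have := Nat.card_le_card_of_surjective (fun i : Fin 18 => f i) (by
      intro y
      obtain ⟨i, hi, h⟩ := hsurj y
      exact ⟨⟨i, hi⟩, h⟩)
    simpa using this
  have hper : ∀ (z : ℤ) (y : Y), ∃ k < 18, g ^ k • y = g ^ z • y := by
    intro z y
    have := Fintype.ofFinite Y
    have h1 : Function.minimalPeriod (g • ·) y ≤ 18 := by
      rw [MulAction.minimalPeriod_eq_card]
      refine le_trans ?_ hcard
      rw [← Nat.card_eq_fintype_card]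
      exact Nat.card_le_card_of_injective _ Subtype.val_injective
    have h0 : 0 < Function.minimalPeriod (g • ·) y := by
      rw [MulAction.minimalPeriod_eq_card]
      have : Nonempty (MulAction.orbit (Subgroup.zpowers g) y) := ⟨⟨y, MulAction.mem_orbit_self y⟩⟩
      exact Fintype.card_pos
    have h2 := MulAction.zpow_smul_mod_minimalPeriod g y z
    have h3 := Int.emod_nonneg z (b := (Function.minimalPeriod (g • ·) y : ℤ)) (by omega)
    have h4 := Int.emod_lt_of_pos z (b := (Function.minimalPeriod (g • ·) y : ℤ)) (by omega)
    obtain ⟨k, hk⟩ := Int.eq_ofNat_of_zero_le h3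
    refine ⟨k, by omega, ?_⟩
    rw [← h2, hk, zpow_natCast]
  have key : ∀ i < 18, ∀ j < 18, goMin t i 18 i = true →
      (∃ z : ℤ, g ^ z • f i = f j) → i ≤ j := by
    rintro i hi j hj hm ⟨z, hz⟩
    obtain ⟨k, hk, e⟩ := hper z (f i)
    rw [hz, (hit k i hi).2] at e
    rw [← hinj _ (hit k i hi).1 _ hj e]
    exact (hmin i).1 hm k (by omega)
  let F := ((List.range 18).filter (fun i => goMin t i 18 i)).toFinset
  have hF : countMin t = F.card :=
    (List.toFinset_card_of_nodup (List.nodup_range.filter _)).symm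
  rw [hF, ← Nat.card_eq_finsetCard]
  symm
  refine Nat.card_congr (Equiv.ofBijective
    (fun i : F => (Quotient.mk'' (f i) : MulAction.orbitRel.Quotient (Subgroup.zpowers g) Y))
    ⟨?_, ?_⟩)
  · rintro ⟨i, hi⟩ ⟨j, hj⟩ h
    simp only [F, List.mem_toFinset, List.mem_filter, List.mem_range] at hi hj
    have h' := Quotient.exact h
    change MulAction.orbitRel _ _ (f i) (f j) at h'
    rw [MulAction.orbitRel_apply] at h'
    obtain ⟨⟨_, z, rfl⟩, hz⟩ := h'
    change g ^ z • f j = f i at hz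
    have hz' : g ^ (-z) • f i = f j := by rw [← hz, smul_smul]; simp
    exact Subtype.ext (le_antisymm (key i hi.1 j hj.1 hi.2 ⟨_, hz'⟩) (key j hj.1 i hi.1 hj.2 ⟨_, hz⟩))
  · intro q
    induction q using Quotient.inductionOn' with
    | h y =>
      have hex : ∃ i, i < 18 ∧ ∃ z : ℤ, g ^ z • y = f i := by
        obtain ⟨i, hi, h⟩ := hsurj y
        exact ⟨i, hi, 0, by simp [h]⟩
      obtain ⟨h1, z, hz⟩ := Nat.find_spec hex
      refine ⟨⟨Nat.find hex, ?_⟩, ?_⟩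
      · simp only [F, List.mem_toFinset, List.mem_filter, List.mem_range]
        refine ⟨h1, (hmin _).2 fun k _ => Nat.find_min' hex ⟨(hit k _ h1).1, k + z, ?_⟩⟩
        rw [← (hit k _ h1).2, ← hz, _root_.zpow_add, mul_smul, zpow_natCast]
      · apply Quotient.sound'
        rw [MulAction.orbitRel_apply]
        exact ⟨⟨_, z, rfl⟩, hz⟩

theorem rot_eq (i : ℕ) : rot i = 3 * (i / 3) + (i + 1) % 3 := rfl

theorem rot_lt {i k : ℕ} (h : i < 3 * k) : rot i < 3 * k := by rw [rot_eq]; omega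

/-- Partial labelling of `X` by the first `3 k` labels. -/
structure Labelling {X : Type*} (S U : X → X) (f : ℕ → X) (k : ℕ) (free : List ℕ)
    (acc : List (ℕ × ℕ)) : Prop where
  inj : ∀ i < 3 * k, ∀ j < 3 * k, f i = f j → i = j
  rot : ∀ i < 3 * k, U (f i) = f (rot i)
  accS : ∀ pq ∈ acc, pq.1 < 3 * k ∧ pq.2 < 3 * k ∧ S (f pq.1) = f pq.2
  cover : ∀ i < 3 * k, i ∈ free ∨ ∃ q, (i, q) ∈ acc ∨ (q, i) ∈ acc
  free_lt : ∀ i ∈ free, i < 3 * k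
  free_nodup : free.Nodup
  free_acc : ∀ i ∈ free, ∀ q, (i, q) ∉ acc ∧ (q, i) ∉ acc

theorem Labelling.pair {X : Type*} {S U : X → X} {f : ℕ → X} {k p q : ℕ} {rest : List ℕ}
    {acc : List (ℕ × ℕ)} (h : Labelling S U f k (p :: rest) acc) (hq : q ∈ rest)
    (e : S (f p) = f q) : Labelling S U f k (rest.erase q) ((p, q) :: acc) := by
  have hnd := h.free_nodup
  rw [List.nodup_cons] at hnd
  constructor
  · exact h.inj
  · exact h.rot
  · intro pq hpq
    rcases List.mem_cons.1 hpq with rfl | hpq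
    · exact ⟨h.free_lt _ (by simp), h.free_lt _ (by simp [hq]), e⟩
    · exact h.accS pq hpq
  · intro i hi
    rcases h.cover i hi with h1 | ⟨z, h1⟩
    · rcases List.mem_cons.1 h1 with rfl | h1
      · exact Or.inr ⟨q, Or.inl (by simp)⟩
      · by_cases hiq : i = q
        · subst hiq
          exact Or.inr ⟨p, Or.inr (by simp)⟩
        · exact Or.inl ((List.mem_erase_of_ne hiq).2 h1)
    · exact Or.inr ⟨z, h1.imp (List.mem_cons_of_mem _) (List.mem_cons_of_mem _)⟩
  · intro i hi
    exact h.free_lt i (List.mem_cons_of_mem _ (List.mem_of_mem_erase hi))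
  · exact hnd.2.erase q
  · intro i hi z
    have h1 := hnd.2.mem_erase_iff.1 hi
    have h2 := h.free_acc i (List.mem_cons_of_mem _ h1.2) z
    have h3 : i ≠ p := fun e => hnd.1 (e ▸ h1.2)
    simp only [List.mem_cons, Prod.mk.injEq, not_or]
    exact ⟨⟨fun c => h3 c.1, h2.1⟩, ⟨fun c => h1.1 c.2, h2.2⟩⟩

theorem Labelling.fresh {X : Type*} {S U : X → X} {f : ℕ → X} {k p : ℕ} {rest : List ℕ}
    {acc : List (ℕ × ℕ)} (hU : ∀ x, U (U (U x)) = x) (hUf : ∀ x, U x ≠ x)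
    (h : Labelling S U f k (p :: rest) acc)
    (e : ∀ q < 3 * k, S (f p) ≠ f q) :
    ∃ f', Labelling S U f' (k + 1) (rest ++ [3 * k + 1, 3 * k + 2]) ((p, 3 * k) :: acc) := by
  have hnd := h.free_nodup
  rw [List.nodup_cons] at hnd
  have hpk := h.free_lt p (by simp)
  generalize hy : S (f p) = y at e
  have e1 : ∀ q < 3 * k, U y ≠ f q := by
    intro q hq c
    refine e _ (rot_lt (rot_lt hq)) ?_
    rw [← h.rot _ (rot_lt hq), ← h.rot _ hq, ← c, hU]
  have e2 : ∀ q < 3 * k, U (U y) ≠ f q := by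
    intro q hq c
    refine e _ (rot_lt hq) ?_
    rw [← h.rot _ hq, ← c, hU]
  have d1 : U y ≠ y := hUf y
  have d2 : U (U y) ≠ U y := hUf _
  have d3 : U (U y) ≠ y := fun c => hUf (U (U y)) (by rw [hU]; exact c.symm)
  let f' : ℕ → X := fun i => if i < 3 * k then f i else if i = 3 * k then y else
    if i = 3 * k + 1 then U y else U (U y)
  have f0 : ∀ i < 3 * k, f' i = f i := fun i hi => if_pos hi
  have g0 : f' (3 * k) = y := by simp [f']
  have g1 : f' (3 * k + 1) = U y := by simp [f']
  have g2 : f' (3 * k + 2) = U (U y) := by simp [f']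
  have cases4 : ∀ i < 3 * (k + 1), i < 3 * k ∨ i = 3 * k ∨ i = 3 * k + 1 ∨ i = 3 * k + 2 := by
    intro i hi; omega
  refine ⟨f', ?_⟩
  constructor
  · intro i hi j hj hij
    rcases cases4 i hi with a | rfl | rfl | rfl <;> rcases cases4 j hj with b | rfl | rfl | rfl <;>
      simp only [f0 _, *] at hij
    all_goals first
      | rfl
      | exact h.inj i a j b hij
      | exact absurd hij.symm (e _ a)
      | exact absurd hij.symm (e1 _ a)
      | exact absurd hij.symm (e2 _ a)
      | exact absurd hij (e _ b)
      | exact absurd hij (e1 _ b)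
      | exact absurd hij (e2 _ b)
      | exact absurd hij d1
      | exact absurd hij d2
      | exact absurd hij d3
      | exact absurd hij.symm d1
      | exact absurd hij.symm d2
      | exact absurd hij.symm d3
  · intro i hi
    rcases cases4 i hi with a | rfl | rfl | rfl
    · rw [f0 i a, f0 _ (rot_lt a), h.rot i a]
    · rw [g0, show _root_.rot (3 * k) = 3 * k + 1 by rw [rot_eq]; omega, g1]
    · rw [g1, show _root_.rot (3 * k + 1) = 3 * k + 2 by rw [rot_eq]; omega, g2]
    · rw [g2, show _root_.rot (3 * k + 2) = 3 * k by rw [rot_eq]; omega, g0, hU]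
  · intro pq hpq
    rcases List.mem_cons.1 hpq with rfl | hpq
    · refine ⟨by simp only; omega, by simp only; omega, ?_⟩
      simp only
      rw [f0 _ hpk, g0, hy]
    · obtain ⟨a, b, c⟩ := h.accS pq hpq
      exact ⟨by omega, by omega, by rw [f0 _ a, f0 _ b, c]⟩
  · intro i hi
    rcases cases4 i hi with a | rfl | rfl | rfl
    · rcases h.cover i a with h1 | ⟨z, h1⟩
      · rcases List.mem_cons.1 h1 with rfl | h1
        · exact Or.inr ⟨3 * k, Or.inl (by simp)⟩
        · exact Or.inl (by simp [h1])
      · exact Or.inr ⟨z, h1.imp (List.mem_cons_of_mem _) (List.mem_cons_of_mem _)⟩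
    · exact Or.inr ⟨p, Or.inr (by simp)⟩
    · exact Or.inl (by simp)
    · exact Or.inl (by simp)
  · intro i hi
    rcases List.mem_append.1 hi with hi | hi
    · have := h.free_lt i (List.mem_cons_of_mem _ hi)
      omega
    · simp only [List.mem_cons, List.not_mem_nil, or_false] at hi
      omega
  · rw [List.nodup_append]
    refine ⟨hnd.2, by simp, ?_⟩
    intro a ha b hb
    have := h.free_lt a (List.mem_cons_of_mem _ ha)
    simp only [List.mem_cons, List.not_mem_nil, or_false] at hb
    omega
  · intro i hi z
    simp only [List.mem_cons, Prod.mk.injEq, not_or]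
    rcases List.mem_append.1 hi with hi | hi
    · have h1 := h.free_lt i (List.mem_cons_of_mem _ hi)
      have h2 := h.free_acc i (List.mem_cons_of_mem _ hi) z
      have h3 : i ≠ p := fun e => hnd.1 (e ▸ hi)
      exact ⟨⟨fun c => h3 c.1, h2.1⟩, ⟨fun c => by omega, h2.2⟩⟩
    · simp only [List.mem_cons, List.not_mem_nil, or_false] at hi
      refine ⟨⟨fun c => by omega, fun c => ?_⟩, ⟨fun c => by omega, fun c => ?_⟩⟩
      · have := (h.accS _ c).1
        simp only at this
        omega
      · have := (h.accS _ c).2.1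
        simp only at this
        omega

theorem tri_drop {k : ℕ} {a b c : ℕ} {sup : List (ℕ × ℕ × ℕ)}
    (h : (a, b, c) :: sup = tri.drop k) :
    k < 6 ∧ a = 3 * k ∧ b = 3 * k + 1 ∧ c = 3 * k + 2 ∧ sup = tri.drop (k + 1) := by
  have hk : k < 6 := by
    by_contra hk
    rw [List.drop_eq_nil_of_le (by simp [tri]; omega)] at h
    simp at h
  refine ⟨hk, ?_⟩
  interval_cases k <;> simp [tri] at h ⊢ <;> tauto

theorem search_sound {X : Type*} [Finite X] (S U : X → X) (hSS : ∀ x, S (S x) = x)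
    (hSf : ∀ x, S x ≠ x) (hU : ∀ x, U (U (U x)) = x) (hUf : ∀ x, U x ≠ x)
    (hcard : Nat.card X = 18)
    (htrans : ∀ A : Set X, A.Nonempty → (∀ x ∈ A, S x ∈ A) → (∀ x ∈ A, U x ∈ A) → A = Set.univ) :
    ∀ (n k : ℕ) (f : ℕ → X) (free : List ℕ) (sup : List (ℕ × ℕ × ℕ)) (acc : List (ℕ × ℕ)),
      0 < k → k ≤ 6 → sup = tri.drop k → Labelling S U f k free acc →
      free.length + 3 * sup.length ≤ 2 * n → search n free sup acc = true →
      ∃ f' acc', leafOK acc' = true ∧ Labelling S U f' 6 [] acc' ∧ ∀ x, ∃ i < 18, f' i = x := by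
  have leaf : ∀ (k : ℕ) (f : ℕ → X) (acc : List (ℕ × ℕ)), 0 < k → Labelling S U f k [] acc →
      (∀ x, ∃ i < 3 * k, f i = x) := by
    intro k f acc hk h
    have := htrans (f '' {i | i < 3 * k}) ⟨f 0, 0, by simp; omega, rfl⟩ ?_ ?_
    · intro x
      have hx : x ∈ f '' {i | i < 3 * k} := by rw [this]; trivial
      exact hx
    · rintro _ ⟨i, hi, rfl⟩
      rcases h.cover i hi with h1 | ⟨z, h1 | h1⟩
      · simp at h1
      · obtain ⟨_, b, c⟩ := h.accS _ h1
        exact ⟨z, b, c.symm⟩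
      · obtain ⟨a, _, c⟩ := h.accS _ h1
        refine ⟨z, a, ?_⟩
        simp only at c
        rw [← c, hSS]
    · rintro _ ⟨i, hi, rfl⟩
      exact ⟨rot i, rot_lt hi, (h.rot i hi).symm⟩
  have pairStep : ∀ {k p : ℕ} {f : ℕ → X} {rest : List ℕ} {acc : List (ℕ × ℕ)},
      Labelling S U f k (p :: rest) acc → ∀ q < 3 * k, S (f p) = f q → q ∈ rest := by
    intro k p f rest acc h q hq e
    have hp := h.free_lt p (by simp)
    rcases h.cover q hq with h1 | ⟨z, h1⟩
    · rcases List.mem_cons.1 h1 with rfl | h1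
      · exact absurd e (hSf _)
      · exact h1
    · exfalso
      rcases h1 with h1 | h1
      · obtain ⟨_, b, c⟩ := h.accS _ h1
        simp only at b c
        rw [← e, hSS] at c
        have := h.inj _ hp _ b c
        subst this
        exact (h.free_acc p (by simp) q).2 h1
      · obtain ⟨a, _, c⟩ := h.accS _ h1
        simp only at a c
        have c' : f z = f p := by rw [← hSS (f z), c, ← e, hSS]
        have := h.inj _ a _ hp c'
        subst this
        exact (h.free_acc z (by simp) q).1 h1
  intro n
  induction n with
  | zero =>
    intro k f free sup acc hk hk6 hsup h hlen hs
    have h1 : free = [] := List.eq_nil_of_length_eq_zero (by omega)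
    have h2 : sup = [] := List.eq_nil_of_length_eq_zero (by omega)
    subst h1 h2
    have hk' : k = 6 := by
      have := congrArg List.length hsup
      simp [tri] at this
      omega
    subst hk'
    rw [search] at hs
    exact ⟨f, acc, hs, h, leaf 6 f acc hk h⟩
  | succ n ih =>
    intro k f free sup acc hk hk6 hsup h hlen hs
    rcases free with _ | ⟨p, rest⟩
    · have hl := leaf k f acc hk h
      have hk' : k = 6 := by
        have h1 := Nat.card_le_card_of_surjective (fun i : Fin (3 * k) => f i) (by
          intro x
          obtain ⟨i, hi, e⟩ := hl x
          exact ⟨⟨i, hi⟩, e⟩)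
        rw [hcard] at h1
        simp at h1
        omega
      subst hk'
      have : sup = [] := by rw [hsup]; rfl
      subst this
      rw [search] at hs
      exact ⟨f, acc, hs, h, hl⟩
    · by_cases hex : ∃ q < 3 * k, S (f p) = f q
      · obtain ⟨q, hq, e⟩ := hex
        have hqr := pairStep h q hq e
        refine ih k f (rest.erase q) sup ((p, q) :: acc) hk hk6 hsup (h.pair hqr e) ?_ ?_
        · have hpos := List.length_pos_of_mem hqr
          rw [List.length_erase_of_mem hqr]
          simp only [List.length_cons] at hlen
          omega
        · rcases sup with _ | ⟨⟨a, b, c⟩, sup⟩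
          · rw [search] at hs
            exact List.all_eq_true.1 hs q hqr
          · rw [search, Bool.and_eq_true] at hs
            exact List.all_eq_true.1 hs.1 q hqr
      · push Not at hex
        obtain ⟨f', h'⟩ := h.fresh hU hUf hex
        rcases sup with _ | ⟨⟨a, b, c⟩, sup⟩
        · exfalso
          have hk' : k = 6 := by
            have := congrArg List.length hsup
            simp [tri] at this
            omega
          subst hk'
          have h1 := Nat.card_le_card_of_injective (fun i : Fin (3 * (6 + 1)) => f' i) (by
            intro i j e
            exact Fin.ext (h'.inj i i.2 j j.2 e))
          rw [hcard] at h1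
          simp at h1
        · obtain ⟨h1, rfl, rfl, rfl, h2⟩ := tri_drop hsup
          rw [search, Bool.and_eq_true] at hs
          refine ih (k + 1) f' _ sup _ (by omega) (by omega) h2 h' ?_ hs.2
          simp only [List.length_cons, List.length_append, List.length_nil] at hlen ⊢
          omega

theorem start_labelling {X : Type*} (S U : X → X) (hU : ∀ x, U (U (U x)) = x)
    (hUf : ∀ x, U x ≠ x) (y : X) :
    ∃ f, Labelling S U f 1 [0, 1, 2] [] := by
  have d1 : U y ≠ y := hUf y
  have d2 : U (U y) ≠ U y := hUf _
  have d3 : U (U y) ≠ y := fun c => hUf (U (U y)) (by rw [hU]; exact c.symm)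
  let f' : ℕ → X := fun i => if i = 0 then y else if i = 1 then U y else U (U y)
  have g0 : f' 0 = y := by simp [f']
  have g1 : f' 1 = U y := by simp [f']
  have g2 : f' 2 = U (U y) := by simp [f']
  refine ⟨f', ?_, ?_, by simp, ?_, by simp, by simp, by simp⟩
  · intro i hi j hj hij
    interval_cases i <;> interval_cases j <;> simp only [g0, g1, g2] at hij <;>
      first
      | rfl
      | exact absurd hij d1
      | exact absurd hij d2
      | exact absurd hij d3
      | exact absurd hij.symm d1
      | exact absurd hij.symm d2
      | exact absurd hij.symm d3
  · intro i hi
    interval_cases i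
    · rw [g0, show rot 0 = 1 from rfl, g1]
    · rw [g1, show rot 1 = 2 from rfl, g2]
    · rw [g2, show rot 2 = 0 from rfl, g0, hU]
  · intro i hi
    left
    interval_cases i <;> simp

/-- Explicit element of `SL(2,ℤ)`. -/
def mkSL (a b c d : ℤ) (h : a * d - b * c = 1) : SL2Z :=
  ⟨!![a, b; c, d], by rw [Matrix.det_fin_two_of]; exact h⟩

theorem SL_eq_mk (A : SL2Z) : ∃ a b c d h, A = mkSL a b c d h := by
  refine ⟨A 0 0, A 0 1, A 1 0, A 1 1, ?_, ?_⟩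
  · have := A.2
    rw [Matrix.det_fin_two] at this
    exact this
  · ext i j
    fin_cases i <;> fin_cases j <;> rfl

theorem mkSL_congr {a b c d a' b' c' d' : ℤ} (h) (h') (ha : a = a') (hb : b = b') (hc : c = c')
    (hd : d = d') : mkSL a b c d h = mkSL a' b' c' d' h' := by
  subst ha hb hc hd; rfl

theorem mkSL_mul {a b c d a' b' c' d' : ℤ} (h) (h') :
    mkSL a b c d h * mkSL a' b' c' d' h' =
      mkSL (a * a' + b * c') (a * b' + b * d') (c * a' + d * c') (c * b' + d * d')
        (by linear_combination (a' * d' - b' * c') * h + h') := by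
  ext i j
  rw [Matrix.SpecialLinearGroup.coe_mul]
  fin_cases i <;> fin_cases j <;> simp [mkSL, Matrix.mul_apply, Fin.sum_univ_two]

theorem mkSL_neg {a b c d : ℤ} (h) :
    - mkSL a b c d h = mkSL (-a) (-b) (-c) (-d) (by linear_combination h) := by
  ext i j
  rw [Matrix.SpecialLinearGroup.coe_neg]
  fin_cases i <;> fin_cases j <;> simp [mkSL]

theorem mkSL_one : (1 : SL2Z) = mkSL 1 0 0 1 (by norm_num) := by
  ext i j
  fin_cases i <;> fin_cases j <;> simp [mkSL]

theorem mem_pmOne (A : SL2Z) : A ∈ pmOne ↔ A = 1 ∨ A = -1 := by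
  constructor
  · rintro ⟨n, rfl⟩
    rcases Int.even_or_odd n with h | h
    · left; exact h.neg_one_zpow
    · right; exact h.neg_one_zpow
  · rintro (rfl | rfl)
    · exact pmOne.one_mem
    · exact Subgroup.mem_zpowers _

theorem xi_eq_one (A : SL2Z) : xi A = 1 ↔ A = 1 ∨ A = -1 := by
  rw [← mem_pmOne]
  exact QuotientGroup.eq_one_iff A

theorem xi_neg (A : SL2Z) : xi (-A) = xi A := by
  have h : xi (-1) = 1 := (xi_eq_one _).2 (Or.inr rfl)
  rw [← neg_one_mul, map_mul, h, one_mul]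

theorem xi_eq (A B : SL2Z) : xi A = xi B ↔ A = B ∨ A = -B := by
  constructor
  · intro h
    have : xi (A * B⁻¹) = 1 := by rw [map_mul, map_inv, h, mul_inv_cancel]
    rcases (xi_eq_one _).1 this with h | h
    · left; exact mul_inv_eq_one.1 h
    · right
      rw [mul_inv_eq_iff_eq_mul] at h
      rw [h, neg_one_mul]
  · rintro (rfl | rfl)
    · rfl
    · exact xi_neg B

theorem xi_surj : Function.Surjective xi := QuotientGroup.mk'_surjective pmOne

/-- The order three element `U = S T`. -/
def Up : PSL2Z := Sp * Tp

theorem Sp_eq : Sp = xi (mkSL 0 (-1) 1 0 (by norm_num)) := rfl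
theorem Tp_eq : Tp = xi (mkSL 1 1 0 1 (by norm_num)) := rfl
theorem Up_eq : Up = xi (mkSL 0 (-1) 1 1 (by norm_num)) := by
  rw [Up, Sp_eq, Tp_eq, ← map_mul, mkSL_mul]; rfl

theorem Sp_sq : Sp ^ 2 = 1 := by
  rw [Sp_eq, ← map_pow, xi_eq_one]
  right
  rw [pow_two, mkSL_mul, mkSL_one, mkSL_neg]; rfl

theorem Up_sq : Up ^ 2 = xi (mkSL (-1) (-1) 1 0 (by norm_num)) := by
  rw [Up_eq, ← map_pow, pow_two, mkSL_mul]; rfl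

theorem Up_cube : Up ^ 3 = 1 := by
  rw [pow_succ, Up_sq, Up_eq, ← map_mul, xi_eq_one]
  right
  rw [mkSL_mul, mkSL_one, mkSL_neg]; rfl

theorem Tp_eq_SU : Tp = Sp * Up := by
  rw [Up, ← mul_assoc, ← pow_two, Sp_sq, one_mul]

theorem Sp_ne_one : Sp ≠ 1 := by
  rw [Sp_eq, Ne, xi_eq_one, mkSL_one, mkSL_neg]
  rintro (h | h) <;> simpa [mkSL] using congrArg (fun A : SL2Z => A 0 0) h

theorem Up_ne_one : Up ≠ 1 := by
  rw [Up_eq, Ne, xi_eq_one, mkSL_one, mkSL_neg]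
  rintro (h | h) <;> simpa [mkSL] using congrArg (fun A : SL2Z => A 0 0) h

theorem closure_SU : Subgroup.closure {Sp, Up} = (⊤ : Subgroup PSL2Z) := by
  have hS : Sp ∈ Subgroup.closure {Sp, Up} := Subgroup.subset_closure (by simp)
  have hU : Up ∈ Subgroup.closure {Sp, Up} := Subgroup.subset_closure (by simp)
  have hT : Tp ∈ Subgroup.closure {Sp, Up} := by rw [Tp_eq_SU]; exact mul_mem hS hU
  rw [eq_top_iff]
  intro x _
  obtain ⟨A, rfl⟩ := xi_surj x
  have hA : A ∈ Subgroup.closure {ModularGroup.S, ModularGroup.T} := by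
    rw [SpecialLinearGroup.SL2Z_generators]; trivial
  induction hA using Subgroup.closure_induction with
  | mem B hB =>
    rcases hB with rfl | rfl
    · exact hS
    · exact hT
  | one => rw [map_one]; exact one_mem _
  | mul B C _ _ hB hC => rw [map_mul]; exact mul_mem (hB trivial) (hC trivial)
  | inv B _ hB => rw [map_inv]; exact inv_mem (hB trivial)

/-- A property of elements that holds for the generators and is closed under products and
inverses. -/
theorem SU_induction {p : PSL2Z → Prop} (hS : p Sp) (hU : p Up) (h1 : p 1)
    (hm : ∀ x y, p x → p y → p (x * y)) (hi : ∀ x, p x → p x⁻¹) (x : PSL2Z) : p x := by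
  have hx : x ∈ Subgroup.closure {Sp, Up} := by rw [closure_SU]; trivial
  induction hx using Subgroup.closure_induction with
  | mem B hB =>
    rcases hB with rfl | rfl
    · exact hS
    · exact hU
  | one => exact h1
  | mul B C _ _ hB hC => exact hm _ _ hB hC
  | inv B _ hB => exact hi _ hB

/-! ### The universal property of the modular group -/

/-- Homomorphism out of a cyclic group. -/
def cycHom {G : Type*} [Group G] (n : ℕ) (g : G) (hg : g ^ n = 1) :
    Multiplicative (ZMod n) →* G :=
  AddMonoidHom.toMultiplicativeLeft (ZMod.lift n ⟨zmultiplesHom (Additive G) (Additive.ofMul g), by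
    simp [← ofMul_pow, hg]⟩)

theorem cycHom_natCast {G : Type*} [Group G] (n : ℕ) (g : G) (hg : g ^ n = 1) (k : ℕ) :
    cycHom n g hg (Multiplicative.ofAdd (k : ZMod n)) = g ^ k := by
  have := ZMod.lift_coe n (⟨zmultiplesHom (Additive G) (Additive.ofMul g), by
    simp [← ofMul_pow, hg]⟩ : {f : ℤ →+ Additive G // f n = 0}) k
  rw [Int.cast_natCast] at this
  simp only [cycHom, AddMonoidHom.coe_toMultiplicativeLeft, Function.comp_apply,
    toAdd_ofAdd, this]
  simp

/-- The orders of the two free factors. -/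
def ordn : Bool → ℕ
  | false => 2
  | true => 3

/-- The two free factors. -/
abbrev Fac (b : Bool) : Type := Multiplicative (ZMod (ordn b))

/-- The two homomorphisms out of the free factors. -/
def facHom {G : Type*} [Group G] (s u : G) (hs : s ^ 2 = 1) (hu : u ^ 3 = 1) :
    ∀ b, Fac b →* G
  | false => cycHom 2 s hs
  | true => cycHom 3 u hu

/-- Sign of the first column of an element of `PSL(2,ℤ)`. -/
def ppSet : Bool → Set PSL2Z
  | false => {x | ∃ a b c d h, x = xi (mkSL a b c d h) ∧ 0 < a * c}
  | true => {x | ∃ a b c d h, x = xi (mkSL a b c d h) ∧ a * c < 0}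

theorem facHom_injective :
    Function.Injective (Monoid.CoprodI.lift (facHom Sp Up Sp_sq Up_cube)) := by
  refine Monoid.CoprodI.lift_injective_of_ping_pong _ (Or.inr ⟨true, ?_⟩) ppSet ?_ ?_ ?_
  · have : Cardinal.mk (Fac true) = 3 := by
      change Cardinal.mk (ZMod 3) = 3
      rw [Cardinal.mk_fintype, ZMod.card]; rfl
    rw [this]
  · rintro (_ | _)
    · exact ⟨_, 1, 0, 1, 1, by norm_num, rfl, by norm_num⟩
    · exact ⟨_, 1, 0, -1, 1, by norm_num, rfl, by norm_num⟩
  · have key : Disjoint (ppSet false) (ppSet true) := by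
      rw [Set.disjoint_left]
      rintro x ⟨a, b, c, d, h, rfl, hac⟩ ⟨a', b', c', d', h', e, hac'⟩
      rw [xi_eq, mkSL_neg] at e
      rcases e with e | e
      · have e1 := congrArg (fun A : SL2Z => A 0 0) e
        have e2 := congrArg (fun A : SL2Z => A 1 0) e
        simp [mkSL] at e1 e2
        subst e1 e2
        linarith
      · have e1 := congrArg (fun A : SL2Z => A 0 0) e
        have e2 := congrArg (fun A : SL2Z => A 1 0) e
        simp [mkSL] at e1 e2
        subst e1 e2
        linarith
    rintro (_ | _) (_ | _) hij
    · exact absurd rfl hij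
    · exact key
    · exact key.symm
    · exact absurd rfl hij
  · have k2 : ∀ h : ZMod 2, h ≠ 0 → h = ((1 : ℕ) : ZMod 2) := by decide
    have k3 : ∀ h : ZMod 3, h ≠ 0 → h = ((1 : ℕ) : ZMod 3) ∨ h = ((2 : ℕ) : ZMod 3) := by decide
    rintro (_ | _) (_ | _) hij h hh
    · exact absurd rfl hij
    · have e := k2 (Multiplicative.toAdd h) hh
      have e' : facHom Sp Up Sp_sq Up_cube false h = Sp := by
        change cycHom 2 Sp Sp_sq (Multiplicative.ofAdd (Multiplicative.toAdd h)) = Sp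
        rw [e, cycHom_natCast, pow_one]
      rw [e']
      rintro _ ⟨x, ⟨a, b, c, d, h, rfl, hac⟩, rfl⟩
      simp only [smul_eq_mul]
      rw [Sp_eq, ← map_mul, mkSL_mul]
      exact ⟨_, _, _, _, _, rfl, by nlinarith⟩
    · have e := k3 (Multiplicative.toAdd h) hh
      rcases e with e | e
      · have e' : facHom Sp Up Sp_sq Up_cube true h = Up := by
          change cycHom 3 Up Up_cube (Multiplicative.ofAdd (Multiplicative.toAdd h)) = Up
          rw [e, cycHom_natCast, pow_one]
        rw [e']
        rintro _ ⟨x, ⟨a, b, c, d, h, rfl, hac⟩, rfl⟩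
        simp only [smul_eq_mul]
        rw [Up_eq, ← map_mul, mkSL_mul]
        exact ⟨_, _, _, _, _, rfl, by nlinarith [sq_nonneg c]⟩
      · have e' : facHom Sp Up Sp_sq Up_cube true h = Up ^ 2 := by
          change cycHom 3 Up Up_cube (Multiplicative.ofAdd (Multiplicative.toAdd h)) = Up ^ 2
          rw [e, cycHom_natCast]
        rw [e', Up_sq]
        rintro _ ⟨x, ⟨a, b, c, d, h, rfl, hac⟩, rfl⟩
        simp only [smul_eq_mul]
        rw [← map_mul, mkSL_mul]
        exact ⟨_, _, _, _, _, rfl, by nlinarith [sq_nonneg a]⟩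
    · exact absurd rfl hij

theorem facHom_of {G : Type*} [Group G] (s u : G) (hs : s ^ 2 = 1) (hu : u ^ 3 = 1) :
    Monoid.CoprodI.lift (facHom s u hs hu)
      (Monoid.CoprodI.of (i := false) (Multiplicative.ofAdd ((1 : ℕ) : ZMod 2))) = s ∧
    Monoid.CoprodI.lift (facHom s u hs hu)
      (Monoid.CoprodI.of (i := true) (Multiplicative.ofAdd ((1 : ℕ) : ZMod 3))) = u := by
  constructor
  · rw [Monoid.CoprodI.lift_of]
    exact (cycHom_natCast 2 s hs 1).trans (pow_one s)
  · rw [Monoid.CoprodI.lift_of]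
    exact (cycHom_natCast 3 u hu 1).trans (pow_one u)

theorem exists_hom {G : Type*} [Group G] (s u : G) (hs : s ^ 2 = 1) (hu : u ^ 3 = 1) :
    ∃ φ : PSL2Z →* G, φ Sp = s ∧ φ Up = u := by
  have hbij : Function.Bijective (Monoid.CoprodI.lift (facHom Sp Up Sp_sq Up_cube)) := by
    refine ⟨facHom_injective, ?_⟩
    rw [← MonoidHom.range_eq_top, eq_top_iff, ← closure_SU, Subgroup.closure_le]
    rintro x (rfl | rfl)
    · exact ⟨_, (facHom_of Sp Up Sp_sq Up_cube).1⟩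
    · exact ⟨_, (facHom_of Sp Up Sp_sq Up_cube).2⟩
  let e := MulEquiv.ofBijective _ hbij
  refine ⟨(Monoid.CoprodI.lift (facHom s u hs hu)).comp e.symm.toMonoidHom, ?_, ?_⟩
  · refine Eq.trans ?_ (facHom_of s u hs hu).1
    refine congrArg (Monoid.CoprodI.lift (facHom s u hs hu)) ?_
    refine (MulEquiv.symm_apply_eq e).2 ?_
    exact (facHom_of Sp Up Sp_sq Up_cube).1.symm
  · refine Eq.trans ?_ (facHom_of s u hs hu).2
    refine congrArg (Monoid.CoprodI.lift (facHom s u hs hu)) ?_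
    refine (MulEquiv.symm_apply_eq e).2 ?_
    exact (facHom_of Sp Up Sp_sq Up_cube).2.symm

/-! ### Elements of finite order -/

/-- `x` is conjugate to `S`, `U` or `U⁻¹`. -/
def ConjEll (x : PSL2Z) : Prop :=
  ∃ g : PSL2Z, g * x * g⁻¹ = Sp ∨ g * x * g⁻¹ = Up ∨ g * x * g⁻¹ = Up⁻¹

theorem ConjEll.of_conj {x y g : PSL2Z} (h : ConjEll y) (e : g * x = y * g) : ConjEll x := by
  obtain ⟨k, hk⟩ := h
  refine ⟨k * g, ?_⟩
  have : k * g * x * (k * g)⁻¹ = k * y * k⁻¹ := by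
    rw [mul_assoc k g x, e]; group
  rwa [this]

theorem conjEll_T {a b c d : ℤ} (h) (k : ℤ) (h')
    (H : ConjEll (xi (mkSL (a + k * c) (b + k * d - k * (a + k * c)) c (d - k * c) h'))) :
    ConjEll (xi (mkSL a b c d h)) := by
  refine H.of_conj (g := xi (mkSL 1 k 0 1 (by norm_num))) ?_
  rw [← map_mul, ← map_mul, mkSL_mul, mkSL_mul]
  congr 1
  apply mkSL_congr <;> ring

theorem conjEll_S {a b c d : ℤ} (h) (h')
    (H : ConjEll (xi (mkSL d (-c) (-b) a h'))) :
    ConjEll (xi (mkSL a b c d h)) := by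
  refine H.of_conj (g := Sp) ?_
  rw [Sp_eq, ← map_mul, ← map_mul, mkSL_mul, mkSL_mul]
  congr 1
  apply mkSL_congr <;> ring

theorem conjEll_of_trace : ∀ (n : ℕ) (a b c d : ℤ) (h : a * d - b * c = 1), |a + d| ≤ 1 →
    c.natAbs ≤ n → ConjEll (xi (mkSL a b c d h)) := by
  intro n
  induction n using Nat.strong_induction_on with
  | _ n ih =>
  intro a b c d h ht hc
  rw [abs_le] at ht
  have hc0 : c ≠ 0 := by
    rintro rfl
    nlinarith [sq_nonneg (a - d), sq_nonneg (a + d)]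
  by_cases hc1 : c = 1 ∨ c = -1
  · -- reduce to `a = 0`
    have hcc : c * c = 1 := by rcases hc1 with rfl | rfl <;> norm_num
    have z1 : a + (-(a * c)) * c = 0 := by linear_combination (-a) * hcc
    have z2 : d - (-(a * c)) * c = a + d := by linear_combination a * hcc
    have z3 : b + (-(a * c)) * d - (-(a * c)) * (a + (-(a * c)) * c) = -c := by
      rw [z1]; linear_combination (-c) * h - b * hcc
    refine conjEll_T h (-(a * c)) (by rw [z3, z1, z2]; linear_combination hcc) ?_
    have e : ∀ h', mkSL (a + (-(a * c)) * c) (b + (-(a * c)) * d - (-(a * c)) * (a + (-(a * c)) * c))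
        c (d - (-(a * c)) * c) h' = mkSL 0 (-c) c (a + d) (by linear_combination hcc) := by
      intro h'
      exact mkSL_congr _ _ z1 z3 rfl z2
    rw [e]
    -- three special elements
    have E0 : ConjEll (xi (mkSL 0 (-1) 1 0 (by norm_num))) := ⟨1, Or.inl (by rw [← Sp_eq]; simp)⟩
    have E1 : ConjEll (xi (mkSL 0 (-1) 1 1 (by norm_num))) :=
      ⟨1, Or.inr (Or.inl (by rw [← Up_eq]; simp))⟩
    have E2 : ConjEll (xi (mkSL 0 (-1) 1 (-1) (by norm_num))) := by
      refine ConjEll.of_conj (y := Up⁻¹) (g := Sp) ⟨1, Or.inr (Or.inr (by simp))⟩ ?_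
      rw [eq_inv_mul_iff_mul_eq, Up_eq, Sp_eq, ← map_mul, ← map_mul, xi_eq]
      right
      rw [mkSL_mul, mkSL_mul, mkSL_neg]
      apply mkSL_congr <;> norm_num
    obtain ⟨t, het⟩ : ∃ t, t = a + d := ⟨_, rfl⟩
    have ht' : t = 0 ∨ t = 1 ∨ t = -1 := by omega
    rw [mkSL_congr _ (show 0 * t - -c * c = 1 by linear_combination hcc) rfl rfl rfl het.symm]
    clear het e z1 z2 z3 h hc
    rcases hc1 with rfl | rfl
    · rcases ht' with rfl | rfl | rfl
      · exact E0
      · exact E1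
      · exact E2
    · rw [← xi_neg, mkSL_neg]
      rcases ht' with rfl | rfl | rfl
      · exact E0
      · exact E2
      · exact E1
  · push Not at hc1
    -- choose the translation
    obtain ⟨k, hk⟩ : ∃ k : ℤ, |a - d + 2 * k * c| ≤ |c| := by
      have hp : 0 < |c| := abs_pos.2 hc0
      have q1 := Int.emod_add_mul_ediv (a - d + |c|) (2 * |c|)
      have q2 := Int.emod_nonneg (a - d + |c|) (b := 2 * |c|) (by omega)
      have q3 := Int.emod_lt_of_pos (a - d + |c|) (b := 2 * |c|) (by omega)
      generalize (a - d + |c|) / (2 * |c|) = q at q1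
      generalize (a - d + |c|) % (2 * |c|) = r at q1 q2 q3
      rcases abs_cases c with ⟨e, _⟩ | ⟨e, _⟩
      · refine ⟨-q, ?_⟩
        rw [abs_le]
        rw [e] at q1 q3 ⊢
        constructor <;> nlinarith
      · refine ⟨q, ?_⟩
        rw [abs_le]
        rw [e] at q1 q3 ⊢
        constructor <;> nlinarith
    have h' : (a + k * c) * (d - k * c) - (b + k * d - k * (a + k * c)) * c = 1 := by
      linear_combination h
    refine conjEll_T h k h' ?_
    have hk' : |(a + k * c) - (d - k * c)| ≤ |c| := by
      convert hk using 2; ring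
    have ht' : (a + k * c) + (d - k * c) = a + d := by ring
    generalize a + k * c = a' at *
    generalize d - k * c = d' at *
    generalize b + k * d - k * a' = b' at *
    refine conjEll_S h' (by linear_combination h') ?_
    have hb : b'.natAbs < c.natAbs := by
      zify
      have hc2 : 2 ≤ |c| := by
        rcases abs_cases c with ⟨e, _⟩ | ⟨e, _⟩ <;> omega
      have s1 : (a' - d') ^ 2 ≤ |c| ^ 2 := sq_le_sq.2 (by rwa [abs_abs])
      have s2 : 4 * (-(b' * c)) = 4 - (a + d) ^ 2 + (a' - d') ^ 2 := by
        rw [← ht']; linear_combination 4 * h'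
      have s3 : -(b' * c) = |b'| * |c| := by
        have : 0 ≤ -(b' * c) := by nlinarith [sq_nonneg (a' - d')]
        rw [← abs_mul, ← abs_neg, abs_of_nonneg this]
      rw [s3] at s2
      by_contra hlt
      push Not at hlt
      nlinarith [sq_nonneg (a + d)]
    exact ih b'.natAbs (by omega) _ _ _ _ _ (by rw [add_comm, ht', abs_le]; exact ht)
      (by rw [Int.natAbs_neg])

theorem pow_trace (A : SL2Z) (ht : 2 ≤ A 0 0 + A 1 1) : ∀ n : ℕ, ∃ u v : ℤ, 0 ≤ v ∧ v < u ∧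
    ((A ^ (n + 1) : SL2Z) : Matrix (Fin 2) (Fin 2) ℤ) = u • A.1 - v • (1 : Matrix (Fin 2) (Fin 2) ℤ)
    := by
  intro n
  have hdet := A.2
  rw [Matrix.det_fin_two] at hdet
  have hCH : A.1 * A.1 = (A 0 0 + A 1 1) • A.1 - (1 : Matrix (Fin 2) (Fin 2) ℤ) := by
    ext i j
    fin_cases i <;> fin_cases j <;>
      simp [Matrix.mul_apply, Fin.sum_univ_two, -zsmul_eq_mul] <;>
      first | linear_combination -hdet | ring
  induction n with
  | zero => exact ⟨1, 0, by norm_num, by norm_num, by simp⟩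
  | succ n ih =>
    obtain ⟨u, v, hv, huv, e⟩ := ih
    refine ⟨(A 0 0 + A 1 1) * u - v, u, by omega, by nlinarith, ?_⟩
    rw [pow_succ, Matrix.SpecialLinearGroup.coe_mul, e, sub_mul, smul_mul_assoc, hCH, smul_mul_assoc,
      one_mul, smul_sub, sub_smul, smul_smul, mul_comm u]
    abel

theorem conjEll_of_finOrder (x : PSL2Z) (hx : x ≠ 1) (hf : IsOfFinOrder x) : ConjEll x := by
  obtain ⟨A, rfl⟩ := xi_surj x
  have key : ∀ B : SL2Z, xi B ≠ 1 → IsOfFinOrder (xi B) → ¬ 2 ≤ B 0 0 + B 1 1 := by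
    intro B hB hfB ht
    obtain ⟨n, hn, e⟩ := isOfFinOrder_iff_pow_eq_one.1 hfB
    obtain ⟨m, rfl⟩ : ∃ m, n = m + 1 := ⟨n - 1, by omega⟩
    obtain ⟨u, v, hv, huv, eq⟩ := pow_trace B ht m
    rw [← map_pow, xi_eq_one] at e
    obtain ⟨w, hw⟩ : ∃ w : ℤ, ((B ^ (m + 1) : SL2Z) : Matrix (Fin 2) (Fin 2) ℤ) =
        w • (1 : Matrix (Fin 2) (Fin 2) ℤ) := by
      rcases e with e | e
      · exact ⟨1, by rw [e]; simp⟩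
      · exact ⟨-1, by rw [e]; simp⟩
    rw [hw] at eq
    have e00 := congrArg (fun M => M 0 0) eq
    have e01 := congrArg (fun M => M 0 1) eq
    have e10 := congrArg (fun M => M 1 0) eq
    have e11 := congrArg (fun M => M 1 1) eq
    simp only [Matrix.sub_apply, Matrix.smul_apply, Matrix.one_apply, smul_eq_mul] at e00 e01 e10 e11
    norm_num at e00 e01 e10 e11
    have hu : u ≠ 0 := by omega
    have b0 : B 0 1 = 0 := by tauto
    have c0 : B 1 0 = 0 := by tauto
    have ad : B 0 0 = B 1 1 := mul_left_cancel₀ hu (by linarith)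
    have hdet := B.2
    rw [Matrix.det_fin_two] at hdet
    change B 0 0 * B 1 1 - B 0 1 * B 1 0 = 1 at hdet
    have a1 : B 0 0 = 1 := by nlinarith
    apply hB
    rw [xi_eq_one]
    left
    ext i j
    fin_cases i <;> fin_cases j <;> simp [b0, c0, a1, ← ad]
  have k1 := key A hx hf
  have k2 := key (-A) (by rwa [xi_neg]) (by rwa [xi_neg])
  obtain ⟨a, b, c, d, h, rfl⟩ := SL_eq_mk A
  rw [mkSL_neg] at k2
  simp [mkSL] at k1 k2
  exact conjEll_of_trace _ a b c d h (by rw [abs_le]; constructor <;> omega) le_rfl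

/-! ### Models of subgroups -/

/-- The coset space of `Γ` is labelled by `0, …, 17` with `S` acting through the digits of `m`
and `U` acting through `rot`. -/
def Model (Γ : Subgroup PSL2Z) (m : ℕ) : Prop :=
  ∃ f : ℕ → PSL2Z ⧸ Γ, (∀ i < 18, ∀ j < 18, f i = f j → i = j) ∧ (∀ y, ∃ i < 18, f i = y) ∧
    (∀ i < 18, look m i < 18 ∧ Sp • f i = f (look m i)) ∧ (∀ i < 18, Up • f i = f (rot i))

theorem rot_lt_eighteen : ∀ i < 18, rot i < 18 := by decide

theorem rot_ne : ∀ i < 18, rot i ≠ i := by decide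

theorem Tp_smul {Γ : Subgroup PSL2Z} {m : ℕ} {f : ℕ → PSL2Z ⧸ Γ}
    (hS : ∀ i < 18, look m i < 18 ∧ Sp • f i = f (look m i)) (hU : ∀ i < 18, Up • f i = f (rot i)) :
    ∀ i < 18, tmap m i < 18 ∧ Tp • f i = f (tmap m i) := by
  intro i hi
  have h := hS (rot i) (rot_lt_eighteen i hi)
  refine ⟨h.1, ?_⟩
  rw [Tp_eq_SU, mul_smul, hU i hi, h.2]
  rfl

theorem card_of_label {Y : Type*} (f : ℕ → Y) (hinj : ∀ i < 18, ∀ j < 18, f i = f j → i = j)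
    (hsurj : ∀ y, ∃ i < 18, f i = y) : Nat.card Y = 18 := by
  have : Function.Bijective (fun i : Fin 18 => f i) := by
    constructor
    · intro i j h
      exact Fin.ext (hinj i i.2 j j.2 h)
    · intro y
      obtain ⟨i, hi, e⟩ := hsurj y
      exact ⟨⟨i, hi⟩, e⟩
  rw [← Nat.card_eq_of_bijective _ this, Nat.card_fin]

/-- The Euler characteristic count of a label model. -/
def cycleSum (m : ℕ) : ℕ := countMin (look m) + countMin rot + countMin (tmap m)

theorem Model.index {Γ : Subgroup PSL2Z} {m : ℕ} (h : Model Γ m) : Γ.index = 18 := by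
  obtain ⟨f, hinj, hsurj, hS, hU⟩ := h
  exact card_of_label f hinj hsurj

theorem Model.nOrb_sum {Γ : Subgroup PSL2Z} {m : ℕ} (h : Model Γ m) :
    nOrb Sp Γ + nOrb (Sp * Tp) Γ + nOrb Tp Γ = cycleSum m := by
  obtain ⟨f, hinj, hsurj, hS, hU⟩ := h
  have h1 : nOrb Sp Γ = _ := card_orbits Sp f (look m) hinj hsurj hS
  have h2 : nOrb (Sp * Tp) Γ = _ := card_orbits (Sp * Tp) f rot hinj hsurj
    (fun i hi => ⟨rot_lt_eighteen i hi, hU i hi⟩)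
  have h3 : nOrb Tp Γ = _ := card_orbits Tp f (tmap m) hinj hsurj (Tp_smul hS hU)
  unfold cycleSum
  rw [h1, h2, h3]

theorem Model.torsionFree {Γ : Subgroup PSL2Z} {m : ℕ} (h : Model Γ m)
    (hm : ∀ i < 18, look m i ≠ i) : TorsionFree Γ := by
  obtain ⟨f, hinj, hsurj, hS, hU⟩ := h
  intro x hx hx1 hf
  obtain ⟨g, hg⟩ := conjEll_of_finOrder x hx1 hf
  have key : (g * x * g⁻¹) • ((g : PSL2Z) : PSL2Z ⧸ Γ) = ((g : PSL2Z) : PSL2Z ⧸ Γ) := by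
    change (((g * x * g⁻¹) * g : PSL2Z) : PSL2Z ⧸ Γ) = _
    rw [inv_mul_cancel_right, eq_comm, QuotientGroup.eq, inv_mul_cancel_left]
    exact hx
  obtain ⟨i, hi, e⟩ := hsurj ((g : PSL2Z) : PSL2Z ⧸ Γ)
  rw [← e] at key
  have hU' : Up • f i ≠ f i := by
    rw [hU i hi]
    exact fun c => rot_ne i hi (hinj _ (rot_lt_eighteen i hi) _ hi c)
  rcases hg with hg | hg | hg <;> rw [hg] at key
  · rw [(hS i hi).2] at key
    exact hm i hi (hinj _ (hS i hi).1 _ hi key)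
  · exact hU' key
  · exact hU' (inv_smul_eq_iff.1 key).symm

/-- The check performed on each of the representatives. -/
def goodCode (m : ℕ) : Bool :=
  (List.range 18).all (fun i => decide (look m i < 18) && decide (look m (look m i) = i) &&
    decide (look m i ≠ i) && (decide (i = 0) || decide (look m i < i) || decide (rot (i - 1) = i))) &&
    decide (cycleSum m = 20)

theorem goodCode_rep : ∀ m ∈ repCodes, goodCode m = true := by decide +kernel

theorem goodCode_spec {m : ℕ} (h : goodCode m = true) :
    (∀ i < 18, look m i < 18 ∧ look m (look m i) = i ∧ look m i ≠ i ∧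
      (i = 0 ∨ look m i < i ∨ rot (i - 1) = i)) ∧ cycleSum m = 20 := by
  unfold goodCode at h
  rw [Bool.and_eq_true, List.all_eq_true] at h
  refine ⟨fun i hi => ?_, by simpa using h.2⟩
  have := h.1 i (List.mem_range.2 hi)
  simp only [Bool.and_eq_true, Bool.or_eq_true, decide_eq_true_eq] at this
  tauto

/-- The rotation as a permutation of `Fin 18`. -/
def rotPerm : Equiv.Perm (Fin 18) where
  toFun i := Fin.ofNat 18 (rot i)
  invFun i := Fin.ofNat 18 (rot (rot i))
  left_inv := by decide
  right_inv := by decide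

theorem exists_model {m : ℕ} (h : goodCode m = true) : ∃ Γ : Subgroup PSL2Z, Model Γ m := by
  obtain ⟨hm, -⟩ := goodCode_spec h
  have hinv : Function.Involutive (fun i : Fin 18 => (⟨look m i, (hm i i.2).1⟩ : Fin 18)) := by
    intro i
    exact Fin.ext (hm i i.2).2.1
  obtain ⟨φ, hφS, hφU⟩ := exists_hom hinv.toPerm rotPerm
    (by ext i; simp [pow_two, hinv i]) (by decide)
  let : MulAction PSL2Z (Fin 18) := MulAction.compHom (Fin 18) φ
  have aS : ∀ i : Fin 18, Sp • i = (⟨look m i, (hm i i.2).1⟩ : Fin 18) := by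
    intro i
    change φ Sp i = _
    rw [hφS]; rfl
  have aU : ∀ i : Fin 18, Up • i = (⟨rot i, rot_lt_eighteen i i.2⟩ : Fin 18) := by
    intro i
    change φ Up i = _
    rw [hφU]
    exact Fin.ext (Nat.mod_eq_of_lt (rot_lt_eighteen i i.2))
  have reach : ∀ n (hn : n < 18), ∃ g : PSL2Z, g • (0 : Fin 18) = ⟨n, hn⟩ := by
    intro n
    induction n using Nat.strong_induction_on with
    | _ n ih =>
      intro hn
      rcases (hm n hn).2.2.2 with h0 | h0 | h0
      · subst h0
        exact ⟨1, one_smul _ _⟩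
      · obtain ⟨g, hg⟩ := ih (look m n) h0 (hm n hn).1
        refine ⟨Sp * g, ?_⟩
        rw [mul_smul, hg, aS]
        exact Fin.ext (hm n hn).2.1
      · have hn0 : n ≠ 0 := by
          rintro rfl
          revert h0; decide
        obtain ⟨g, hg⟩ := ih (n - 1) (by omega) (by omega)
        refine ⟨Up * g, ?_⟩
        rw [mul_smul, hg, aU]
        exact Fin.ext h0
  choose! c hc using reach
  have hsm : ∀ a b : PSL2Z, ((a : PSL2Z ⧸ MulAction.stabilizer PSL2Z (0 : Fin 18)) = b) ↔
      a • (0 : Fin 18) = b • (0 : Fin 18) := by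
    intro a b
    rw [QuotientGroup.eq, MulAction.mem_stabilizer_iff, mul_smul, inv_smul_eq_iff, eq_comm]
  refine ⟨MulAction.stabilizer PSL2Z (0 : Fin 18), fun i => (c i : PSL2Z), ?_, ?_, ?_, ?_⟩
  · intro i hi j hj e
    rw [hsm, hc i hi, hc j hj] at e
    exact congrArg Fin.val e
  · intro y
    obtain ⟨g, rfl⟩ := QuotientGroup.mk_surjective y
    refine ⟨(g • (0 : Fin 18) : Fin 18), Fin.is_lt _, ?_⟩
    rw [hsm, hc _ (Fin.is_lt _)]
  · intro i hi
    refine ⟨(hm i hi).1, ?_⟩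
    refine (hsm (Sp * c i) _).2 ?_
    rw [mul_smul, hc i hi, hc _ (hm i hi).1, aS]
  · intro i hi
    refine (hsm (Up * c i) _).2 ?_
    rw [mul_smul, hc i hi, hc _ (rot_lt_eighteen i hi), aU]

/-! ### Conjugacy invariants -/

theorem nFix_conj (g : PSL2Z) {H K : Subgroup PSL2Z} (h : SubgroupConj H K) :
    nFix g H = nFix g K := by
  obtain ⟨k, rfl⟩ := h
  let e : PSL2Z ⧸ H ≃ PSL2Z ⧸ (Subgroup.map (MulAut.conj k).toMonoidHom H) :=
    Quotient.congr (Equiv.mulRight k⁻¹) (by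
      intro a b
      rw [QuotientGroup.leftRel_apply, QuotientGroup.leftRel_apply, Subgroup.mem_map]
      constructor
      · intro hab
        refine ⟨_, hab, ?_⟩
        simp [mul_assoc]
      · rintro ⟨x, hx, hxe⟩
        have : x = a⁻¹ * b := by
          simp only [MulEquiv.toMonoidHom_eq_coe, MonoidHom.coe_coe, MulAut.conj_apply,
            Equiv.coe_mulRight, _root_.mul_inv_rev, inv_inv] at hxe
          have h2 : k * x * k⁻¹ = k * (a⁻¹ * b) * k⁻¹ := by rw [hxe]; group
          exact mul_left_cancel (mul_right_cancel h2)
        rwa [← this])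
  refine Nat.card_congr (Equiv.subtypeEquiv e ?_)
  intro x
  obtain ⟨x, rfl⟩ := QuotientGroup.mk_surjective x
  rw [← e.apply_eq_iff_eq]
  have : e (g • (x : PSL2Z ⧸ H)) = g • e (x : PSL2Z ⧸ H) := by
    exact congrArg (fun z : PSL2Z => (z : PSL2Z ⧸ Subgroup.map (MulAut.conj k).toMonoidHom H))
      (mul_assoc g x k⁻¹)
  rw [this]

/-- Number of fixed labels. -/
def countFix (t : ℕ → ℕ) : ℕ := ((List.range 18).filter (fun i => t i == i)).length

theorem nFix_eq {Γ : Subgroup PSL2Z} {g : PSL2Z} (f : ℕ → PSL2Z ⧸ Γ) (t : ℕ → ℕ)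
    (hinj : ∀ i < 18, ∀ j < 18, f i = f j → i = j) (hsurj : ∀ y, ∃ i < 18, f i = y)
    (ht : ∀ i < 18, t i < 18 ∧ g • f i = f (t i)) : nFix g Γ = countFix t := by
  classical
  unfold nFix countFix
  have hb : Function.Bijective
      (fun i : {i // i ∈ (Finset.range 18).filter (fun i => t i = i)} =>
        (⟨f i, by
          have := i.2
          rw [Finset.mem_filter, Finset.mem_range] at this
          rw [(ht i this.1).2, this.2]⟩ : {x : PSL2Z ⧸ Γ // g • x = x})) := by
    constructor
    · intro i j e
      have hi := i.2
      have hj := j.2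
      rw [Finset.mem_filter, Finset.mem_range] at hi hj
      exact Subtype.ext (hinj _ hi.1 _ hj.1 (congrArg Subtype.val e))
    · rintro ⟨y, hy⟩
      obtain ⟨i, hi, rfl⟩ := hsurj y
      refine ⟨⟨i, ?_⟩, rfl⟩
      rw [Finset.mem_filter, Finset.mem_range]
      rw [(ht i hi).2] at hy
      exact ⟨hi, hinj _ (ht i hi).1 _ hi hy⟩
  rw [← Nat.card_eq_of_bijective _ hb, Nat.card_eq_fintype_card, Fintype.card_coe]
  rw [← List.toFinset_card_of_nodup (List.nodup_range.filter _)]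
  congr 1
  ext i
  simp

theorem comp_label {Γ : Subgroup PSL2Z} {f : ℕ → PSL2Z ⧸ Γ} {g h : PSL2Z} {s t : ℕ → ℕ}
    (hs : ∀ i < 18, s i < 18 ∧ g • f i = f (s i)) (ht : ∀ i < 18, t i < 18 ∧ h • f i = f (t i)) :
    ∀ i < 18, (fun j => s (t j)) i < 18 ∧ (g * h) • f i = f ((fun j => s (t j)) i) := by
  intro i hi
  have h1 := ht i hi
  have h2 := hs _ h1.1
  exact ⟨h2.1, by rw [mul_smul, h1.2, h2.2]⟩

theorem pow_label {Γ : Subgroup PSL2Z} {f : ℕ → PSL2Z ⧸ Γ} {g : PSL2Z} {s : ℕ → ℕ}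
    (hs : ∀ i < 18, s i < 18 ∧ g • f i = f (s i)) (n : ℕ) :
    ∀ i < 18, s^[n] i < 18 ∧ (g ^ n) • f i = f (s^[n] i) := by
  induction n with
  | zero => intro i hi; simpa using hi
  | succ n ih =>
    intro i hi
    have h1 := hs i hi
    have h2 := ih _ h1.1
    rw [Function.iterate_succ_apply, pow_succ, mul_smul, h1.2]
    exact h2

/-- The hyperbolic word used to separate classes. -/
def Wp : PSL2Z := (Tp * Up) * ((Tp * Up) * (Tp * ((Tp * Up) * (Tp * Tp))))

/-- The corresponding label map. -/
def wmap (m i : ℕ) : ℕ :=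
  tmap m (rot (tmap m (rot (tmap m (tmap m (rot (tmap m (tmap m i))))))))

/-- Invariants of a label model. -/
def codeInv (m : ℕ) : ℕ × ℕ × ℕ :=
  (countFix (tmap m)^[10], countFix (tmap m)^[3], countFix (wmap m))

/-- The same invariants, for a subgroup. -/
noncomputable def grpInv (Γ : Subgroup PSL2Z) : ℕ × ℕ × ℕ :=
  (nFix (Tp ^ 10) Γ, nFix (Tp ^ 3) Γ, nFix Wp Γ)

theorem Model.inv_eq {Γ : Subgroup PSL2Z} {m : ℕ} (h : Model Γ m) : grpInv Γ = codeInv m := by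
  obtain ⟨f, hinj, hsurj, hS, hU⟩ := h
  have hT := Tp_smul hS hU
  have hR : ∀ i < 18, rot i < 18 ∧ Up • f i = f (rot i) :=
    fun i hi => ⟨rot_lt_eighteen i hi, hU i hi⟩
  have hTU := comp_label hT hR
  have hW := comp_label hTU (comp_label hTU (comp_label hT (comp_label hTU (comp_label hT hT))))
  have h1 := nFix_eq f _ hinj hsurj (pow_label hT 10)
  have h2 := nFix_eq f _ hinj hsurj (pow_label hT 3)
  have h3 := nFix_eq f _ hinj hsurj hW
  exact Prod.ext h1 (Prod.ext h2 h3)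

theorem codeInv_nodup : (repCodes.map codeInv).Nodup := by decide +kernel

theorem repCodes_card : repCodes.toFinset.card = 26 := by decide +kernel

/-! ### Completeness -/

theorem nonempty_mor {l : ℕ} {acc : List (ℕ × ℕ)} (hok : leafOK acc = true) (hl : l = pack acc)
    (hsum : cycleSum l = 20) : ∃ m ∈ repCodes, ∃ h : ℕ → ℕ, ∀ i < 18,
      h i < 18 ∧ h (rot i) = rot (h i) ∧ h (look l i) = look m (h i) := by
  subst hl
  unfold leafOK at hok
  rw [Bool.and_eq_true] at hok
  have h2 := hok.2
  have hb : Nat.beq (countMin (look (pack acc)) + countMin rot + countMin (tmap (pack acc))) 20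
      = true := Nat.beq_eq ▸ hsum
  rw [hb, cond_true, List.any_eq_true] at h2
  obtain ⟨m, hm, h2⟩ := h2
  rw [List.any_eq_true] at h2
  obtain ⟨x, -, h2⟩ := h2
  rw [Bool.and_eq_true] at h2
  have h3 := h2.2
  unfold tryOne at h3
  refine ⟨m.1, List.mem_map_of_mem hm, ?_⟩
  split at h3
  · exact absurd h3 (by simp)
  · rename_i bs _
    refine ⟨hval bs, fun i hi => ?_⟩
    unfold isMor at h3
    rw [List.all_eq_true] at h3
    have h4 := h3 i (List.mem_range.2 hi)
    rw [Bool.and_eq_true, Bool.and_eq_true, Nat.beq_eq, Nat.beq_eq, Nat.ble_eq] at h4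
    exact ⟨Nat.lt_succ_of_le h4.1.1, h4.1.2, h4.2⟩

theorem conj_fixed_ne {Γ : Subgroup PSL2Z} (hΓ : TorsionFree Γ) {s : PSL2Z} (hs : s ≠ 1)
    (hf : IsOfFinOrder s) (x : PSL2Z ⧸ Γ) : s • x ≠ x := by
  obtain ⟨g, rfl⟩ := QuotientGroup.mk_surjective x
  intro h
  change ((s * g : PSL2Z) : PSL2Z ⧸ Γ) = g at h
  rw [eq_comm, QuotientGroup.eq] at h
  refine hΓ _ h ?_ ?_
  · intro c
    apply hs
    have : s = g * (g⁻¹ * (s * g)) * g⁻¹ := by group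
    rw [this, c]; group
  · have : g⁻¹ * (s * g) = MulAut.conj g⁻¹ s := by simp [mul_assoc]
    rw [this]
    exact (MulAut.conj g⁻¹ : PSL2Z ≃* PSL2Z).toMonoidHom.isOfFinOrder hf

theorem exists_leaf_model {Γ : Subgroup PSL2Z} (hi : Γ.index = 18) (hΓ : TorsionFree Γ) :
    ∃ acc, leafOK acc = true ∧ Model Γ (pack acc) := by
  have hcard : Nat.card (PSL2Z ⧸ Γ) = 18 := hi
  have : Finite (PSL2Z ⧸ Γ) := Nat.finite_of_card_ne_zero (by omega)
  have hSS : ∀ x : PSL2Z ⧸ Γ, Sp • Sp • x = x := by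
    intro x; rw [← mul_smul, ← pow_two, Sp_sq, one_smul]
  have hUU : ∀ x : PSL2Z ⧸ Γ, Up • Up • Up • x = x := by
    intro x
    have : Up * Up * Up = Up ^ 3 := by rw [pow_succ, pow_two]
    rw [← mul_smul, ← mul_smul, this, Up_cube, one_smul]
  have hSf : ∀ x : PSL2Z ⧸ Γ, Sp • x ≠ x := conj_fixed_ne hΓ Sp_ne_one
    (isOfFinOrder_iff_pow_eq_one.2 ⟨2, by norm_num, Sp_sq⟩)
  have hUf : ∀ x : PSL2Z ⧸ Γ, Up • x ≠ x := conj_fixed_ne hΓ Up_ne_one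
    (isOfFinOrder_iff_pow_eq_one.2 ⟨3, by norm_num, Up_cube⟩)
  have htrans : ∀ A : Set (PSL2Z ⧸ Γ), A.Nonempty → (∀ x ∈ A, Sp • x ∈ A) →
      (∀ x ∈ A, Up • x ∈ A) → A = Set.univ := by
    intro A hA h1 h2
    have key : ∀ g : PSL2Z, (∀ x ∈ A, g • x ∈ A) ∧ (∀ x ∈ A, g⁻¹ • x ∈ A) := by
      refine SU_induction ?_ ?_ ?_ ?_ ?_
      · refine ⟨h1, fun x hx => ?_⟩
        have : Sp⁻¹ • x = Sp • x := by rw [inv_smul_eq_iff, hSS]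
        rw [this]; exact h1 x hx
      · refine ⟨h2, fun x hx => ?_⟩
        have : Up⁻¹ • x = Up • Up • x := by rw [inv_smul_eq_iff, hUU]
        rw [this]; exact h2 _ (h2 x hx)
      · simp
      · rintro x y ⟨ha, hb⟩ ⟨hc, hd⟩
        refine ⟨fun z hz => ?_, fun z hz => ?_⟩
        · rw [mul_smul]; exact ha _ (hc z hz)
        · rw [_root_.mul_inv_rev, mul_smul]; exact hd _ (hb z hz)
      · rintro x ⟨ha, hb⟩
        exact ⟨hb, by simpa using ha⟩
    obtain ⟨a, ha⟩ := hA
    rw [Set.eq_univ_iff_forall]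
    intro y
    obtain ⟨g, rfl⟩ := MulAction.exists_smul_eq PSL2Z a y
    exact (key g).1 a ha
  obtain ⟨f, hf⟩ := start_labelling (fun x : PSL2Z ⧸ Γ => Sp • x) (fun x => Up • x) hUU hUf
    ((1 : PSL2Z) : PSL2Z ⧸ Γ)
  obtain ⟨f', acc, hok, hL, hsurj⟩ := search_sound (fun x : PSL2Z ⧸ Γ => Sp • x)
    (fun x => Up • x) hSS hSf hUU hUf hcard htrans 9 1 f [0, 1, 2] (tri.drop 1) []
    (by norm_num) (by norm_num) rfl hf (by decide) search_true
  refine ⟨acc, hok, f', hL.inj, hsurj, ?_, hL.rot⟩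
  unfold leafOK at hok
  rw [Bool.and_eq_true] at hok
  have hw := hok.1
  unfold wellPacked at hw
  rw [List.all_eq_true] at hw
  intro i hi
  rcases hL.cover i hi with h1 | ⟨q, h1 | h1⟩
  · exact absurd h1 (by simp)
  · have h2 := hw _ h1
    have h3 := hL.accS _ h1
    rw [Bool.and_eq_true, Nat.beq_eq, Nat.beq_eq] at h2
    rw [h2.1]
    exact h3.2
  · have h2 := hw _ h1
    have h3 := hL.accS _ h1
    rw [Bool.and_eq_true, Nat.beq_eq, Nat.beq_eq] at h2
    rw [h2.2]
    refine ⟨h3.1, ?_⟩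
    have h4 : Sp • f' q = f' i := h3.2.2
    rw [← h4]
    exact hSS _

theorem conj_of_mor {Γ Δ : Subgroup PSL2Z} {l m : ℕ} (hΓ : Model Γ l) (hΔ : Model Δ m)
    (h : ℕ → ℕ) (hh : ∀ i < 18, h i < 18 ∧ h (rot i) = rot (h i) ∧ h (look l i) = look m (h i)) :
    SubgroupConj Δ Γ := by
  have iΓ := hΓ.index
  have iΔ := hΔ.index
  obtain ⟨f, hinj, hsurj, hS, hU⟩ := hΓ
  obtain ⟨f', hinj', hsurj', hS', hU'⟩ := hΔ
  choose n hn hfn using hsurj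
  have hnf : ∀ i < 18, n (f i) = i := fun i hi => hinj _ (hn _) _ hi (hfn _)
  let ψ : PSL2Z ⧸ Γ → PSL2Z ⧸ Δ := fun x => f' (h (n x))
  have hψ : ∀ g : PSL2Z, ∀ x, ψ (g • x) = g • ψ x := by
    refine SU_induction ?_ ?_ ?_ ?_ ?_
    · intro x
      have e := hS (n x) (hn x)
      have e2 := hh _ (hn x)
      change f' (h (n (Sp • x))) = Sp • f' (h (n x))
      rw [(hS' _ e2.1).2, ← e2.2.2]
      conv_lhs => rw [← hfn x, e.2, hnf _ e.1]
    · intro x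
      have e2 := hh _ (hn x)
      change f' (h (n (Up • x))) = Up • f' (h (n x))
      rw [hU' _ e2.1, ← e2.2.1]
      conv_lhs => rw [← hfn x, hU _ (hn x), hnf _ (rot_lt_eighteen _ (hn x))]
    · intro x; rw [one_smul, one_smul]
    · intro a b ha hb x
      rw [mul_smul, ha, hb, mul_smul]
    · intro a ha x
      rw [eq_inv_smul_iff, ← ha, smul_inv_smul]
  obtain ⟨k, hk⟩ := QuotientGroup.mk_surjective (ψ ((1 : PSL2Z) : PSL2Z ⧸ Γ))
  refine ⟨k, ?_⟩
  have hle : Γ ≤ Subgroup.map (MulAut.conj k).toMonoidHom Δ := by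
    intro x hx
    have h1 : x • ((1 : PSL2Z) : PSL2Z ⧸ Γ) = ((1 : PSL2Z) : PSL2Z ⧸ Γ) := by
      change ((x * 1 : PSL2Z) : PSL2Z ⧸ Γ) = _
      rw [eq_comm, QuotientGroup.eq]; simpa using hx
    have h2 := hψ x ((1 : PSL2Z) : PSL2Z ⧸ Γ)
    rw [h1, ← hk] at h2
    change ((k : PSL2Z) : PSL2Z ⧸ Δ) = ((x * k : PSL2Z) : PSL2Z ⧸ Δ) at h2
    rw [QuotientGroup.eq] at h2
    exact ⟨_, h2, by simp [mul_assoc]⟩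
  have hidx : (Subgroup.map (MulAut.conj k).toMonoidHom Δ).index = 18 := by
    rw [← iΔ]
    exact Subgroup.index_map_equiv Δ (MulAut.conj k)
  have hrel := Subgroup.relIndex_mul_index hle
  rw [hidx, iΓ] at hrel
  have h1 : Γ.relIndex (Subgroup.map (MulAut.conj k).toMonoidHom Δ) = 1 := by omega
  exact le_antisymm (Subgroup.relIndex_eq_one.1 h1) hle

/-- The representative subgroup attached to a code. -/
noncomputable def repGrp (m : {m // m ∈ repCodes.toFinset}) : Subgroup PSL2Z :=
  (exists_model (goodCode_rep m.1 (List.mem_toFinset.1 m.2))).choose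

theorem repGrp_model (m : {m // m ∈ repCodes.toFinset}) : Model (repGrp m) m.1 :=
  (exists_model (goodCode_rep m.1 (List.mem_toFinset.1 m.2))).choose_spec

theorem repGrp_prop (m : {m // m ∈ repCodes.toFinset}) :
    (repGrp m).index = 18 ∧ GenusZero (repGrp m) ∧ TorsionFree (repGrp m) := by
  have hM := repGrp_model m
  obtain ⟨h1, h2⟩ := goodCode_spec (goodCode_rep m.1 (List.mem_toFinset.1 m.2))
  refine ⟨hM.index, ?_, hM.torsionFree fun i hi => (h1 i hi).2.2.1⟩
  unfold GenusZero
  rw [hM.nOrb_sum, hM.index, h2]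

theorem card_quot_of_reps {α β ι : Type*} (r : α → α → Prop) (G : ι → α) (F : α → β)
    (hF : ∀ a b, r a b → F a = F b) (hinj : ∀ i j, F (G i) = F (G j) → i = j)
    (hsurj : ∀ a, ∃ i, r (G i) a) : Nat.card (Quot r) = Nat.card ι := by
  have hb : Function.Bijective (fun i => Quot.mk r (G i)) := by
    constructor
    · intro i j e
      exact hinj i j (congrArg (Quot.lift F hF) e)
    · intro q
      obtain ⟨a, rfl⟩ := Quot.exists_rep q
      obtain ⟨i, hi⟩ := hsurj a
      exact ⟨i, Quot.sound hi⟩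
  exact (Nat.card_eq_of_bijective _ hb).symm

theorem grpInv_conj {H K : Subgroup PSL2Z} (h : SubgroupConj H K) : grpInv H = grpInv K := by
  unfold grpInv
  rw [nFix_conj _ h, nFix_conj _ h, nFix_conj _ h]

theorem repGrp_inj (m m' : {m // m ∈ repCodes.toFinset})
    (e : grpInv (repGrp m) = grpInv (repGrp m')) : m = m' := by
  rw [(repGrp_model m).inv_eq, (repGrp_model m').inv_eq] at e
  exact Subtype.ext (List.inj_on_of_nodup_map codeInv_nodup (List.mem_toFinset.1 m.2)
    (List.mem_toFinset.1 m'.2) e)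

theorem repGrp_surj {Γ : Subgroup PSL2Z} (h1 : Γ.index = 18) (h2 : GenusZero Γ)
    (h3 : TorsionFree Γ) : ∃ m, SubgroupConj (repGrp m) Γ := by
  obtain ⟨acc, hok, hM⟩ := exists_leaf_model h1 h3
  have hsum : cycleSum (pack acc) = 20 := by
    rw [← hM.nOrb_sum]
    unfold GenusZero at h2
    rw [h2, h1]
  obtain ⟨m, hm, h, hh⟩ := nonempty_mor hok rfl hsum
  exact ⟨⟨m, List.mem_toFinset.2 hm⟩, conj_of_mor hM (repGrp_model _) h hh⟩

theorem card_rep : Nat.card {m // m ∈ repCodes.toFinset} = 26 := by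
  rw [Nat.card_eq_fintype_card, Fintype.card_coe, repCodes_card]

theorem count_tf_index_eighteen :
    countClasses (fun Γ => Γ.index = 18 ∧ GenusZero Γ ∧ TorsionFree Γ) = 26 := by
  unfold countClasses
  rw [← card_rep]
  refine card_quot_of_reps _ (fun m => ⟨repGrp m, repGrp_prop m⟩) (fun A => grpInv A.1) ?_ ?_ ?_
  · intro A B h
    exact grpInv_conj h
  · intro m m'
    exact repGrp_inj m m'
  · rintro ⟨Γ, h1, h2, h3⟩
    exact repGrp_surj h1 h2 h3
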